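/- Let A be a timed automaton and let {G(q)}_{q ∈ Q} be the least solution of the state-based guard equations. Then the relation ≼^LU_A on configurations of A, defined by (q, v) ≼^LU_A (q, v') iff v ⊑^LU_{G(q)} v', is a simulation on the configurations of A. -/

import Mathlib

open scoped NNReal

/-! ## Atomic constraints over a set of clocks -/

/-- Comparison operator `◁ ∈ {<, ≤}`. -/
inductive Ineq : Type where
  | lt : Ineq
  | le : Ineq
deriving DecidableEq

/-- Interpretation of a comparison operator on reals. -/
def Ineq.holds : Ineq → ℝ → ℝ → Prop
  | .lt, a, b => a < b
  | .le, a, b => a ≤ b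

/-- Atomic constraints over clocks `X`:
`upper x o c` is `x ◁ c` (c ∈ ℕ), `lower c o x` is `c ◁ x` (c ∈ ℕ),
`diag x y o d` is `x - y ◁ d` (d ∈ ℤ). -/
inductive Constr (X : Type) : Type where
  | upper : X → Ineq → ℕ → Constr X
  | lower : ℕ → Ineq → X → Constr X
  | diag : X → X → Ineq → ℤ → Constr X
deriving DecidableEq

namespace Constr

/-- Is the constraint a diagonal constraint `x - y ◁ d`? -/
def isDiag {X : Type} : Constr X → Bool
  | .diag _ _ _ _ => true
  | _ => false

/-- The integer constant of a constraint. -/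
def constOf {X : Type} : Constr X → ℤ
  | .upper _ _ c => (c : ℤ)
  | .lower c _ _ => (c : ℤ)
  | .diag _ _ _ d => d

/-- Satisfaction of a constraint by a clock valuation `v : X → ℝ≥0`. -/
def sat {X : Type} (v : X → ℝ≥0) : Constr X → Prop
  | .upper x o c => o.holds (v x : ℝ) (c : ℝ)
  | .lower c o x => o.holds (c : ℝ) (v x : ℝ)
  | .diag x y o d => o.holds ((v x : ℝ) - (v y : ℝ)) (d : ℝ)

end Constr

/-- Time elapse: `v + δ`. -/
def shift {X : Type} (v : X → ℝ≥0) (δ : ℝ≥0) : X → ℝ≥0 := fun x => v x + δ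

/-- The relation `v ⊑_G v'`: for all `φ ∈ G` and all delays `δ ≥ 0`,
`v + δ ⊨ φ` implies `v' + δ ⊨ φ`. -/
def simG {X : Type} (G : Set (Constr X)) (v v' : X → ℝ≥0) : Prop :=
  ∀ φ ∈ G, ∀ δ : ℝ≥0, Constr.sat (shift v δ) φ → Constr.sat (shift v' δ) φ

/-- `Z ⊑_G Z'` on sets of valuations. -/
def simGZ {X : Type} (G : Set (Constr X)) (Z Z' : Set (X → ℝ≥0)) : Prop :=
  ∀ v ∈ Z, ∃ v' ∈ Z', simG G v v'

open Classical in
/-- `[R]v`: reset the clocks in `R` to `0`. -/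
noncomputable def reset {X : Type} (R : Set X) (v : X → ℝ≥0) : X → ℝ≥0 :=
  fun x => if x ∈ R then 0 else v x

/-- Weakest precondition `wp(⊑_φ, R)` of a single constraint over a reset. -/
def wpReset {X : Type} (R : Set X) : Constr X → Set (Constr X)
  | .upper x o c => {ψ | x ∉ R ∧ ψ = .upper x o c}
  | .lower c o x => {ψ | x ∉ R ∧ ψ = .lower c o x}
  | .diag x y o d =>
      {ψ | (x ∉ R ∧ y ∉ R ∧ ψ = .diag x y o d) ∨
           (x ∉ R ∧ y ∈ R ∧ 0 ≤ d ∧ ψ = .upper x o d.toNat) ∨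
           (x ∈ R ∧ y ∉ R ∧ 0 ≤ -d ∧ ψ = .lower (-d).toNat o y)}

/-- Weakest precondition `wp(⊑_G, R)` of a set of constraints over a reset. -/
def wpResetSet {X : Type} (R : Set X) (G : Set (Constr X)) : Set (Constr X) :=
  ⋃ φ ∈ G, wpReset R φ

/-! ## Timed automata -/

/-- A transition: source state, guard (finite conjunction of constraints),
reset set, target state. -/
abbrev TTrans (Q X : Type) : Type := Q × Finset (Constr X) × Set X × Q

def TTrans.src {Q X : Type} (t : TTrans Q X) : Q := t.1
def TTrans.grd {Q X : Type} (t : TTrans Q X) : Finset (Constr X) := t.2.1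
def TTrans.rst {Q X : Type} (t : TTrans Q X) : Set X := t.2.2.1
def TTrans.tgt {Q X : Type} (t : TTrans Q X) : Q := t.2.2.2

/-- A timed automaton. -/
structure TA (Q X : Type) : Type where
  init : Q
  trans : Finset (TTrans Q X)
  acc : Set Q

/-- Action step of a timed automaton along transition `t`. -/
def Step {Q X : Type} (A : TA Q X) (t : TTrans Q X) (c c' : Q × (X → ℝ≥0)) : Prop :=
  t ∈ A.trans ∧ TTrans.src t = c.1 ∧ (∀ φ ∈ TTrans.grd t, Constr.sat c.2 φ) ∧
    c'.1 = TTrans.tgt t ∧ c'.2 = reset (TTrans.rst t) c.2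

/-- `r` is a simulation on the configurations of `A`: a reflexive transitive
relation, relating only configurations with equal states, compatible with
delays and action transitions. -/
def IsSimulation {Q X : Type} (A : TA Q X)
    (r : (Q × (X → ℝ≥0)) → (Q × (X → ℝ≥0)) → Prop) : Prop :=
  Reflexive r ∧ Transitive r ∧
  ∀ q v q' v', r (q, v) (q', v') →
    q = q' ∧
    (∀ δ : ℝ≥0, ∃ δ' : ℝ≥0, r (q, shift v δ) (q, shift v' δ')) ∧
    (∀ t c₁, Step A t (q, v) c₁ →
      ∃ v₁', Step A t (q, v') (c₁.1, v₁') ∧ r c₁ (c₁.1, v₁'))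

/-- The state-based guard equations:
`G(q) = ⋃_{(q,g,R,q₁) ∈ T} ({g} ∪ wp(⊑_{G(q₁)}, R))`. -/
def GuardEq {Q X : Type} (A : TA Q X) (G : Q → Set (Constr X)) : Prop :=
  ∀ q, G q = ⋃ t ∈ A.trans, ⋃ (_ : TTrans.src t = q),
    ((TTrans.grd t : Set (Constr X)) ∪ wpResetSet (TTrans.rst t) (G (TTrans.tgt t)))

/-! ## LU bounds -/

def lowerConstAt {X : Type} [DecidableEq X] (x : X) : Constr X → WithBot ℕ
  | .lower c _ y => if y = x then (c : WithBot ℕ) else ⊥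
  | _ => ⊥

def upperConstAt {X : Type} [DecidableEq X] (x : X) : Constr X → WithBot ℕ
  | .upper y _ c => if y = x then (c : WithBot ℕ) else ⊥
  | _ => ⊥

/-- `L_G(x)`: maximum constant among lower-bound constraints `c ◁ x` in `G`
(`⊥ = -∞` if none). -/
def Lbound {X : Type} [DecidableEq X] (G : Finset (Constr X)) (x : X) : WithBot ℕ :=
  G.sup (lowerConstAt x)

/-- `U_G(x)`: maximum constant among upper-bound constraints `x ◁ c` in `G`
(`⊥ = -∞` if none). -/
def Ubound {X : Type} [DecidableEq X] (G : Finset (Constr X)) (x : X) : WithBot ℕ :=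
  G.sup (upperConstAt x)

/-- The LU simulation `v ≼_LU v'` for bounds functions `L U : X → ℕ ∪ {-∞}`. -/
def luSim {X : Type} (L U : X → WithBot ℕ) (v v' : X → ℝ≥0) : Prop :=
  ∀ x : X,
    (v' x < v x → (L x).map (fun c : ℕ => (c : ℝ)) < ((v' x : ℝ) : WithBot ℝ)) ∧
    (v x < v' x → (U x).map (fun c : ℕ => (c : ℝ)) < ((v x : ℝ) : WithBot ℝ))

/-- The relation `v ⊑^LU_G v'`: `v ≼_{LU(G)} v'` and every diagonal constraint
of `G` satisfied by `v` is satisfied by `v'`. -/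
def luglu {X : Type} [DecidableEq X] (G : Finset (Constr X)) (v v' : X → ℝ≥0) : Prop :=
  luSim (Lbound G) (Ubound G) v v' ∧
    ∀ φ ∈ G, φ.isDiag → Constr.sat v φ → Constr.sat v' φ

/-- Lifting a relation on valuations to sets of valuations. -/
def zoneRel {X : Type} (r : (X → ℝ≥0) → (X → ℝ≥0) → Prop) (Z Z' : Set (X → ℝ≥0)) : Prop :=
  ∀ v ∈ Z, ∃ v' ∈ Z', r v v'

/-! ## Runs of timed automata -/

/-- `stepsFrom A c l`: the alternating delay-action sequence `l` is a valid
sequence of steps of `A` starting at configuration `c`. -/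
def stepsFrom {Q X : Type} (A : TA Q X) :
    (Q × (X → ℝ≥0)) → List (ℝ≥0 × TTrans Q X) → Prop
  | _, [] => True
  | c, (δ, t) :: l =>
      t ∈ A.trans ∧ TTrans.src t = c.1 ∧
      (∀ φ ∈ TTrans.grd t, Constr.sat (shift c.2 δ) φ) ∧
      stepsFrom A (TTrans.tgt t, reset (TTrans.rst t) (shift c.2 δ)) l

/-- Configuration reached after a sequence of delay-action steps. -/
noncomputable def endConfig {Q X : Type} :
    (Q × (X → ℝ≥0)) → List (ℝ≥0 × TTrans Q X) → (Q × (X → ℝ≥0))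
  | c, [] => c
  | c, (δ, t) :: l => endConfig (TTrans.tgt t, reset (TTrans.rst t) (shift c.2 δ)) l

/-- A run of `A`: a valid sequence of delay-action steps from `(q₀, 0̄)`. -/
def TA.Run {Q X : Type} (A : TA Q X) : Type :=
  {l : List (ℝ≥0 × TTrans Q X) // stepsFrom A (A.init, fun _ => 0) l}

/-- A run is accepting if it ends in an accepting state. -/
def TA.Accepting {Q X : Type} (A : TA Q X) (r : A.Run) : Prop :=
  (endConfig (A.init, fun _ => 0) r.val).1 ∈ A.acc

/-- `A` is diagonal-free: no guard contains a diagonal constraint. -/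
def DiagFree {Q X : Type} (A : TA Q X) : Prop :=
  ∀ t ∈ A.trans, ∀ φ ∈ TTrans.grd t, ¬ φ.isDiag

/-- The (finite) set of diagonal constraints occurring in guards of `A`. -/
def diagGuards {Q X : Type} [DecidableEq X] (A : TA Q X) : Finset (Constr X) :=
  A.trans.biUnion fun t => (TTrans.grd t).filter fun φ => φ.isDiag

/-! ## Updateable timed automata -/

/-- Atomic update of a clock: `x := c` or `x := y + d`. -/
inductive AtomicUp (X : Type) : Type where
  | const : ℕ → AtomicUp X
  | add : X → ℤ → AtomicUp X
deriving DecidableEq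

/-- `up(v) : X → ℝ` (may be negative). -/
def applyUpd {X : Type} (up : X → AtomicUp X) (v : X → ℝ≥0) : X → ℝ :=
  fun x => match up x with
    | .const c => (c : ℝ)
    | .add y d => (v y : ℝ) + (d : ℝ)

/-- Weakest precondition `wp(⊑_φ, up)` of a single constraint over an update. -/
def wpUpd {X : Type} [DecidableEq X] (up : X → AtomicUp X) : Constr X → Set (Constr X)
  | .upper x o c =>
      match up x with
      | .const _ => ∅
      | .add y d => if 0 ≤ (c : ℤ) - d then {Constr.upper y o ((c : ℤ) - d).toNat} else ∅
  | .lower c o x =>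
      match up x with
      | .const _ => ∅
      | .add y d => if 0 ≤ (c : ℤ) - d then {Constr.lower ((c : ℤ) - d).toNat o y} else ∅
  | .diag x y o c =>
      match up x, up y with
      | .const _, .const _ => ∅
      | .add y₁ d₁, .const c₂ =>
          if 0 ≤ c + (c₂ : ℤ) - d₁ then {Constr.upper y₁ o (c + (c₂ : ℤ) - d₁).toNat} else ∅
      | .const c₁, .add y₂ d₂ =>
          if 0 ≤ (c₁ : ℤ) - d₂ - c then {Constr.lower ((c₁ : ℤ) - d₂ - c).toNat o y₂} else ∅
      | .add y₁ d₁, .add y₂ d₂ =>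
          if y₁ = y₂ then ∅ else {Constr.diag y₁ y₂ o (c - d₁ + d₂)}

/-- Weakest precondition `wp(⊑_G, up)` of a set of constraints over an update. -/
def wpUpdSet {X : Type} [DecidableEq X] (up : X → AtomicUp X) (G : Set (Constr X)) :
    Set (Constr X) :=
  ⋃ φ ∈ G, wpUpd up φ

/-- The set of constraints `{0 ≤ x | x ∈ X}`. -/
def nonnegConstrs (X : Type) : Set (Constr X) := {φ | ∃ x : X, φ = Constr.lower 0 Ineq.le x}

/-- A transition of an updateable timed automaton: source, guard, update, target. -/
abbrev UTrans (Q X : Type) : Type := Q × Finset (Constr X) × (X → AtomicUp X) × Q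

def UTrans.src {Q X : Type} (t : UTrans Q X) : Q := t.1
def UTrans.grd {Q X : Type} (t : UTrans Q X) : Finset (Constr X) := t.2.1
def UTrans.upd {Q X : Type} (t : UTrans Q X) : X → AtomicUp X := t.2.2.1
def UTrans.tgt {Q X : Type} (t : UTrans Q X) : Q := t.2.2.2

/-- An updateable timed automaton. -/
structure UTA (Q X : Type) : Type where
  init : Q
  trans : Finset (UTrans Q X)
  acc : Set Q

/-- Action step of an updateable timed automaton along transition `t`:
the guard holds, `up(v) ≥ 0`, and the new valuation is `up(v)`. -/
def UStep {Q X : Type} (A : UTA Q X) (t : UTrans Q X) (c c' : Q × (X → ℝ≥0)) : Prop :=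
  t ∈ A.trans ∧ UTrans.src t = c.1 ∧ (∀ φ ∈ UTrans.grd t, Constr.sat c.2 φ) ∧
    c'.1 = UTrans.tgt t ∧ ∀ x, (c'.2 x : ℝ) = applyUpd (UTrans.upd t) c.2 x

/-- `r` is a simulation on configurations of an updateable timed automaton. -/
def IsSimulationU {Q X : Type} (A : UTA Q X)
    (r : (Q × (X → ℝ≥0)) → (Q × (X → ℝ≥0)) → Prop) : Prop :=
  Reflexive r ∧ Transitive r ∧
  ∀ q v q' v', r (q, v) (q', v') →
    q = q' ∧
    (∀ δ : ℝ≥0, ∃ δ' : ℝ≥0, r (q, shift v δ) (q, shift v' δ')) ∧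
    (∀ t c₁, UStep A t (q, v) c₁ →
      ∃ v₁', UStep A t (q, v') (c₁.1, v₁') ∧ r c₁ (c₁.1, v₁'))

/-- State-based guard equations for updateable timed automata. -/
def GuardEqU {Q X : Type} [DecidableEq X] (A : UTA Q X) (G : Q → Set (Constr X)) : Prop :=
  ∀ q, G q = ⋃ t ∈ A.trans, ⋃ (_ : UTrans.src t = q),
    ((UTrans.grd t : Set (Constr X)) ∪ wpUpdSet (UTrans.upd t) (nonnegConstrs X)
      ∪ wpUpdSet (UTrans.upd t) (G (UTrans.tgt t)))

/-- Kleene iterates `G^i(q)` of the state-based guard equations. -/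
def iterG {Q X : Type} [DecidableEq X] (A : UTA Q X) : ℕ → Q → Set (Constr X)
  | 0 => fun q => ⋃ t ∈ A.trans, ⋃ (_ : UTrans.src t = q),
      ((UTrans.grd t : Set (Constr X)) ∪ wpUpdSet (UTrans.upd t) (nonnegConstrs X))
  | (i + 1) => fun q => iterG A i q ∪
      (⋃ t ∈ A.trans, ⋃ (_ : UTrans.src t = q),
        wpUpdSet (UTrans.upd t) (iterG A i (UTrans.tgt t)))

/-- `G^{i+1}(q)` is coloured red: a new diagonal constraint was added, or a new
non-diagonal constraint whose constant is strictly bigger than the constant of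
every non-diagonal constraint of the same kind on the same clock in `G^i(q)`. -/
def RedAt {Q X : Type} [DecidableEq X] (A : UTA Q X) : ℕ → Q → Prop
  | 0, _ => False
  | (i + 1), q =>
      (∃ φ : Constr X, φ ∈ iterG A (i + 1) q ∧ φ ∉ iterG A i q ∧ φ.isDiag) ∨
      (∃ (x : X) (o : Ineq) (c : ℕ),
        Constr.upper x o c ∈ iterG A (i + 1) q ∧ Constr.upper x o c ∉ iterG A i q ∧
        ∀ (o' : Ineq) (c' : ℕ), Constr.upper x o' c' ∈ iterG A i q → c' < c) ∨
      (∃ (x : X) (o : Ineq) (c : ℕ),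
        Constr.lower c o x ∈ iterG A (i + 1) q ∧ Constr.lower c o x ∉ iterG A i q ∧
        ∀ (o' : Ineq) (c' : ℕ), Constr.lower c' o' x ∈ iterG A i q → c' < c)

/-- `G^i(q)` is coloured green. -/
def GreenAt {Q X : Type} [DecidableEq X] (A : UTA Q X) (i : ℕ) (q : Q) : Prop :=
  ¬ RedAt A i q

/-- Absolute value of the constant of an atomic update. -/
def updBound {X : Type} : AtomicUp X → ℕ
  | .const c => c
  | .add _ d => d.natAbs

/-! ## The statement -/

/-!
A delay leaves clock differences and the comparison of `v(x)` with `v'(x)` unchanged and only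
raises values, so it preserves `⊑^LU_G`. For a transition, two facts matter. First, `⊑^LU_G`
preserves every constraint of `G`, not only the diagonal ones: where a clock moves in the harmful
direction, the LU condition makes a lower bound hold at `v'` and an upper bound fail at `v`.
Second, `wp(⊑_φ, R)` is at most one constraint `ψ`, and then `[R]v ⊨ φ` iff `v ⊨ ψ`; when it is
empty, the truth of `[R]v ⊨ φ` does not depend on `v`. So the guard and the weakest preconditions
lying in `G(q)` suffice to establish `⊑^LU_{G(q₁)}` after the transition.
-/

namespace Ineq

variable {o : Ineq} {a b a' b' : ℝ}

theorem holds_of_lt (h : a < b) : o.holds a b := by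
  cases o
  exacts [h, h.le]

theorem holds.le (h : o.holds a b) : a ≤ b := by
  cases o
  exacts [le_of_lt h, h]

theorem holds.mono (h : o.holds a b) (ha : a' ≤ a) (hb : b ≤ b') : o.holds a' b' := by
  cases o
  exacts [(ha.trans_lt h).trans_le hb, (ha.trans h).trans hb]

theorem holds_neg_left : o.holds (-a) b ↔ o.holds (-b) a := by
  cases o
  exacts [neg_lt, neg_le]

end Ineq

section Bounds

variable {X : Type} [DecidableEq X] {G : Finset (Constr X)} {x : X}

theorem Lbound_le_iff {b : WithBot ℕ} :
    Lbound G x ≤ b ↔ ∀ c o, Constr.lower c o x ∈ G → (c : WithBot ℕ) ≤ b := by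
  refine Finset.sup_le_iff.trans ⟨fun h c o hc ↦ ?_, fun h φ hφ ↦ ?_⟩
  · simpa only [lowerConstAt, if_true] using h _ hc
  · cases φ with
    | lower c o y =>
      obtain rfl | hyx := eq_or_ne y x
      · simpa only [lowerConstAt, if_true] using h c o hφ
      · simp only [lowerConstAt, hyx, if_false, bot_le]
    | upper | diag => exact bot_le

theorem Ubound_le_iff {b : WithBot ℕ} :
    Ubound G x ≤ b ↔ ∀ c o, Constr.upper x o c ∈ G → (c : WithBot ℕ) ≤ b := by
  refine Finset.sup_le_iff.trans ⟨fun h c o hc ↦ ?_, fun h φ hφ ↦ ?_⟩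
  · simpa only [upperConstAt, if_true] using h _ hc
  · cases φ with
    | upper y o c =>
      obtain rfl | hyx := eq_or_ne y x
      · simpa only [upperConstAt, if_true] using h c o hφ
      · simp only [upperConstAt, hyx, if_false, bot_le]
    | lower | diag => exact bot_le

theorem le_Lbound {c : ℕ} {o : Ineq} (h : Constr.lower c o x ∈ G) :
    (c : WithBot ℕ) ≤ Lbound G x :=
  Lbound_le_iff.1 le_rfl c o h

theorem le_Ubound {c : ℕ} {o : Ineq} (h : Constr.upper x o c ∈ G) :
    (c : WithBot ℕ) ≤ Ubound G x :=
  Ubound_le_iff.1 le_rfl c o h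

end Bounds

section Reset

variable {X : Type} {R : Set X} {x : X} {φ ψ : Constr X} {v v' : X → ℝ≥0}

theorem reset_of_mem (hx : x ∈ R) (v : X → ℝ≥0) : reset R v x = 0 := if_pos hx

theorem reset_of_notMem (hx : x ∉ R) (v : X → ℝ≥0) : reset R v x = v x := if_neg hx

theorem sat_reset_iff_of_mem_wpReset (hψ : ψ ∈ wpReset R φ) :
    Constr.sat (reset R v) φ ↔ Constr.sat v ψ := by
  cases φ with
  | upper x o c | lower c o x =>
    obtain ⟨hx, rfl⟩ := hψ
    simp only [Constr.sat, reset_of_notMem hx]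
  | diag x y o d =>
    obtain ⟨hx, hy, rfl⟩ | ⟨hx, hy, hd, rfl⟩ | ⟨hx, hy, hd, rfl⟩ := hψ
    · simp only [Constr.sat, reset_of_notMem hx, reset_of_notMem hy]
    · have hcast : ((d.toNat : ℕ) : ℝ) = d := mod_cast Int.toNat_of_nonneg hd
      simp only [Constr.sat, reset_of_notMem hx, reset_of_mem hy, NNReal.coe_zero, sub_zero, hcast]
    · have hcast : (((-d).toNat : ℕ) : ℝ) = -d := mod_cast Int.toNat_of_nonneg hd
      simp only [Constr.sat, reset_of_mem hx, reset_of_notMem hy, NNReal.coe_zero, zero_sub, hcast,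
        Ineq.holds_neg_left]

theorem sat_reset_of_wpReset_eq_empty (hφ : wpReset R φ = ∅) (h : Constr.sat (reset R v) φ) :
    Constr.sat (reset R v') φ := by
  have hnot : ∀ ψ, ψ ∉ wpReset R φ := Set.eq_empty_iff_forall_notMem.1 hφ
  cases φ with
  | upper x o c | lower c o x =>
    have hx : x ∈ R := not_not.1 fun hx ↦ hnot _ ⟨hx, rfl⟩
    simpa only [Constr.sat, reset_of_mem hx] using h
  | diag x y o d =>
    by_cases hx : x ∈ R <;> by_cases hy : y ∈ R
    · simpa only [Constr.sat, reset_of_mem hx, reset_of_mem hy] using h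
    · -- Here `d > 0`, so the constraint `0 - y ◁ d` always holds.
      have hd : 0 < d := by
        by_contra! hd
        exact hnot _ (.inr (.inr ⟨hx, hy, neg_nonneg.2 hd, rfl⟩))
      have hneg : -(v' y : ℝ) < d :=
        (neg_nonpos.2 (v' y).coe_nonneg).trans_lt (Int.cast_pos.2 hd)
      simpa only [Constr.sat, reset_of_mem hx, reset_of_notMem hy, NNReal.coe_zero, zero_sub]
        using Ineq.holds_of_lt hneg
    · -- Here `d < 0`, so the constraint `x - 0 ◁ d` never holds.
      have hd : d < 0 := by
        by_contra! hd
        exact hnot _ (.inr (.inl ⟨hx, hy, hd, rfl⟩))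
      simp only [Constr.sat, reset_of_notMem hx, reset_of_mem hy, NNReal.coe_zero, sub_zero] at h
      exact absurd (Int.cast_nonneg_iff.1 ((v x).coe_nonneg.trans h.le)) hd.not_ge
    · exact absurd (.inl ⟨hx, hy, rfl⟩) (hnot _)

end Reset

theorem lt_of_map_natCast_lt {c : ℕ} {b : WithBot ℕ} {a : ℝ} (hc : (c : WithBot ℕ) ≤ b)
    (h : b.map (fun n : ℕ ↦ (n : ℝ)) < (a : WithBot ℝ)) : (c : ℝ) < a :=
  WithBot.coe_lt_coe.1 ((Nat.mono_cast.withBot_map hc).trans_lt h)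

namespace luSim

variable {X : Type} {L U L' U' : X → WithBot ℕ} {v v' v'' : X → ℝ≥0} {x : X} {c : ℕ} {o : Ineq}

protected theorem refl (L U : X → WithBot ℕ) (v : X → ℝ≥0) : luSim L U v v :=
  fun _ ↦ ⟨fun h ↦ (lt_irrefl _ h).elim, fun h ↦ (lt_irrefl _ h).elim⟩

protected theorem trans (h : luSim L U v v') (h' : luSim L U v' v'') : luSim L U v v'' := by
  refine fun x ↦ ⟨fun hlt ↦ ?_, fun hlt ↦ ?_⟩
  · obtain hx | hx := lt_or_ge (v'' x) (v' x)
    · exact (h' x).1 hx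
    · exact ((h x).1 (hx.trans_lt hlt)).trans_le (WithBot.coe_le_coe.2 hx)
  · obtain hx | hx := lt_or_ge (v x) (v' x)
    · exact (h x).2 hx
    · exact ((h' x).2 (hx.trans_lt hlt)).trans_le (WithBot.coe_le_coe.2 hx)

protected theorem shift (h : luSim L U v v') (δ : ℝ≥0) :
    luSim L U (shift v δ) (shift v' δ) := by
  have le_shift (w : X → ℝ≥0) (x : X) : ((w x : ℝ) : WithBot ℝ) ≤ (shift w δ x : ℝ) :=
    WithBot.coe_le_coe.2 (NNReal.coe_le_coe.2 le_self_add)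
  exact fun x ↦ ⟨fun hlt ↦ ((h x).1 (lt_of_add_lt_add_right hlt)).trans_le (le_shift v' x),
    fun hlt ↦ ((h x).2 (lt_of_add_lt_add_right hlt)).trans_le (le_shift v x)⟩

protected theorem reset {R : Set X} (h : luSim L U v v') (hL : ∀ x ∉ R, L' x ≤ L x)
    (hU : ∀ x ∉ R, U' x ≤ U x) : luSim L' U' (reset R v) (reset R v') := by
  intro x
  by_cases hx : x ∈ R
  · simp only [reset_of_mem hx, lt_self_iff_false, false_imp_iff, and_self]
  · simp only [reset_of_notMem hx]
    exact ⟨fun hlt ↦ (Nat.mono_cast.withBot_map (hL x hx)).trans_lt ((h x).1 hlt),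
      fun hlt ↦ (Nat.mono_cast.withBot_map (hU x hx)).trans_lt ((h x).2 hlt)⟩

theorem sat_lower (h : luSim L U v v') (hc : (c : WithBot ℕ) ≤ L x)
    (hv : Constr.sat v (.lower c o x)) : Constr.sat v' (.lower c o x) := by
  obtain hx | hx := lt_or_ge (v' x) (v x)
  · exact Ineq.holds_of_lt (lt_of_map_natCast_lt hc ((h x).1 hx))
  · exact hv.mono le_rfl hx

theorem sat_upper (h : luSim L U v v') (hc : (c : WithBot ℕ) ≤ U x)
    (hv : Constr.sat v (.upper x o c)) : Constr.sat v' (.upper x o c) := by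
  obtain hx | hx := lt_or_ge (v x) (v' x)
  · exact absurd hv.le (lt_of_map_natCast_lt hc ((h x).2 hx)).not_ge
  · exact hv.mono hx le_rfl

end luSim

namespace luglu

variable {X : Type} [DecidableEq X] {G G' : Finset (Constr X)} {v v' v'' : X → ℝ≥0}

protected theorem refl (G : Finset (Constr X)) (v : X → ℝ≥0) : luglu G v v :=
  ⟨luSim.refl _ _ v, fun _ _ _ h ↦ h⟩

protected theorem trans (h : luglu G v v') (h' : luglu G v' v'') : luglu G v v'' :=
  ⟨h.1.trans h'.1, fun φ hφ hd hv ↦ h'.2 φ hφ hd (h.2 φ hφ hd hv)⟩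

protected theorem shift (h : luglu G v v') (δ : ℝ≥0) : luglu G (shift v δ) (shift v' δ) := by
  refine ⟨h.1.shift δ, fun φ hφ hd hv ↦ ?_⟩
  cases φ with
  | upper | lower => cases hd
  | diag x y o d =>
    simp only [Constr.sat, shift, NNReal.coe_add, add_sub_add_right_eq_sub] at hv ⊢
    exact h.2 _ hφ hd hv

theorem sat (h : luglu G v v') {φ : Constr X} (hφ : φ ∈ G) (hv : Constr.sat v φ) :
    Constr.sat v' φ := by
  cases φ with
  | upper x o c => exact h.1.sat_upper (le_Ubound hφ) hv
  | lower c o x => exact h.1.sat_lower (le_Lbound hφ) hv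
  | diag x y o d => exact h.2 _ hφ rfl hv

protected theorem reset {R : Set X} (hwp : wpResetSet R (G' : Set (Constr X)) ⊆ G)
    (h : luglu G v v') : luglu G' (reset R v) (reset R v') := by
  have mem_of_mem_wpReset {φ ψ : Constr X} (hφ : φ ∈ G') (hψ : ψ ∈ wpReset R φ) : ψ ∈ G :=
    hwp (Set.mem_biUnion hφ hψ)
  refine ⟨h.1.reset (fun x hx ↦ ?_) (fun x hx ↦ ?_), fun φ hφ _ hv ↦ ?_⟩
  · exact Lbound_le_iff.2 fun c o hc ↦ le_Lbound (mem_of_mem_wpReset hc ⟨hx, rfl⟩)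
  · exact Ubound_le_iff.2 fun c o hc ↦ le_Ubound (mem_of_mem_wpReset hc ⟨hx, rfl⟩)
  · obtain hempty | ⟨ψ, hψ⟩ := (wpReset R φ).eq_empty_or_nonempty
    · exact sat_reset_of_wpReset_eq_empty hempty hv
    · rw [sat_reset_iff_of_mem_wpReset hψ] at hv ⊢
      exact h.sat (mem_of_mem_wpReset hφ hψ) hv

end luglu

section Automata

variable {Q X : Type} {A : TA Q X} {G : Q → Set (Constr X)}

/-- The family `G` is closed under backward propagation along the transitions of `A`: it satisfies
the guard equations with `⊇` in place of `=`. The preorders `⊑^LU_{G(q)}` of such a family form a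
simulation. -/
def GuardClosed (A : TA Q X) (G : Q → Set (Constr X)) : Prop :=
  ∀ t ∈ A.trans, (t.grd : Set (Constr X)) ∪ wpResetSet t.rst (G t.tgt) ⊆ G t.src

theorem GuardEq.guardClosed (h : GuardEq A G) : GuardClosed A G := by
  intro t ht φ hφ
  rw [h]
  exact Set.mem_biUnion ht (Set.mem_iUnion.2 ⟨rfl, hφ⟩)

theorem GuardClosed.exists_step_luglu [DecidableEq X] (hG : GuardClosed A G)
    (hfin : ∀ q, (G q).Finite) {q : Q} {v v' : X → ℝ≥0} (h : luglu (hfin q).toFinset v v')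
    {t : TTrans Q X} {c : Q × (X → ℝ≥0)} (hstep : Step A t (q, v) c) :
    ∃ w, Step A t (q, v') (c.1, w) ∧ luglu (hfin c.1).toFinset c.2 w := by
  obtain ⟨q₁, v₁⟩ := c
  obtain ⟨ht, rfl, hgrd, rfl, rfl⟩ := hstep
  obtain ⟨hgrd_sub, hwp_sub⟩ := Set.union_subset_iff.1 (hG t ht)
  refine ⟨reset t.rst v', ⟨ht, rfl, fun φ hφ ↦ ?_, rfl, rfl⟩, h.reset ?_⟩
  · exact h.sat ((hfin _).mem_toFinset.2 (hgrd_sub hφ)) (hgrd φ hφ)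
  · simpa only [Set.Finite.coe_toFinset] using hwp_sub

end Automata

theorem stmt6_general {Q X : Type} [DecidableEq X] (A : TA Q X) (G : Q → Set (Constr X))
    (hG : GuardClosed A G) (hfin : ∀ q, (G q).Finite) :
    IsSimulation A (fun c c' => c.1 = c'.1 ∧ luglu (hfin c.1).toFinset c.2 c'.2) := by
  refine ⟨fun c ↦ ⟨rfl, luglu.refl _ c.2⟩, ?_, ?_⟩
  · rintro ⟨q, u⟩ ⟨_, v⟩ ⟨_, w⟩ ⟨rfl, huv⟩ ⟨rfl, hvw⟩
    exact ⟨rfl, huv.trans hvw⟩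
  · rintro q v _ v' ⟨rfl, h⟩
    refine ⟨rfl, fun δ ↦ ⟨δ, rfl, h.shift δ⟩, fun t c hstep ↦ ?_⟩
    obtain ⟨w, hstep', hw⟩ := hG.exists_step_luglu hfin h hstep
    exact ⟨w, hstep', rfl, hw⟩

theorem stmt6 {Q X : Type} [Fintype Q] [Fintype X] [DecidableEq X] (A : TA Q X)
    (G : Q → Set (Constr X)) (hfix : GuardEq A G)
    (hleast : ∀ G' : Q → Set (Constr X), GuardEq A G' → ∀ q, G q ⊆ G' q)
    (hfin : ∀ q, (G q).Finite) :
    IsSimulation A (fun c c' => c.1 = c'.1 ∧ luglu (hfin c.1).toFinset c.2 c'.2) :=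
  stmt6_general A G hfix.guardClosed hfin
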